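/- Let X be a compact metric space with diam(X) < π/2 and p > 1. If μ ∈ P_p(Susp(X)) is supported on the equator X × {π/2}, then the map s ↦ (L_s)_#μ, where L_s([x,t]) = [x,st], is the unique constant-speed geodesic in P_p(Susp(X)) from δ_𝟎 to μ. -/

import Mathlib

open MeasureTheory

/-- An abstract presentation of the spherical suspension of a metric space `X`. -/
structure SuspensionOf (X : Type*) [MetricSpace X] (S : Type*) [MetricSpace S] where
  pt : X → ℝ → S
  surj : ∀ z : S, ∃ x : X, ∃ t ∈ Set.Icc (0 : ℝ) Real.pi, pt x t = z
  dist_eq : ∀ (x y : X) (t s : ℝ), t ∈ Set.Icc (0 : ℝ) Real.pi →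
    s ∈ Set.Icc (0 : ℝ) Real.pi →
    dist (pt x t) (pt y s) =
      Real.arccos (Real.cos t * Real.cos s +
        Real.sin t * Real.sin s * Real.cos (dist x y))

/-- The `p`-Wasserstein distance associated to a cost (distance) function `d`. -/
noncomputable def Wp {Z : Type*} [MeasurableSpace Z] (d : Z → Z → ℝ) (p : ℝ)
    (μ ν : Measure Z) : ℝ :=
  sInf {c : ℝ | ∃ γ : Measure (Z × Z), IsProbabilityMeasure γ ∧
    γ.map Prod.fst = μ ∧ γ.map Prod.snd = ν ∧
    c = (∫ z, d z.1 z.2 ^ p ∂γ) ^ (1 / p)}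

lemma aux_attained {S : Type*} [MetricSpace S] [CompactSpace S] [MeasurableSpace S] [BorelSpace S]
    (p : ℝ) (hp : 1 < p) (μ ν : Measure S) [IsProbabilityMeasure μ] [IsProbabilityMeasure ν] :
    ∃ Γ : Measure (S × S), IsProbabilityMeasure Γ ∧ Γ.map Prod.fst = μ ∧ Γ.map Prod.snd = ν ∧
      Wp (fun a b : S => dist a b) p μ ν = (∫ z, dist z.1 z.2 ^ p ∂Γ) ^ (1 / p) := by
  have hp0 : 0 < p := by linarith
  let μ' : ProbabilityMeasure S := ⟨μ, inferInstance⟩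
  let ν' : ProbabilityMeasure S := ⟨ν, inferInstance⟩
  let K : Set (ProbabilityMeasure (S × S)) :=
    {Γ | Γ.map (measurable_fst (α := S) (β := S)).aemeasurable = μ' ∧
      Γ.map (measurable_snd (α := S) (β := S)).aemeasurable = ν'}
  have hK : IsCompact K := by
    apply IsClosed.isCompact
    exact (isClosed_eq (ProbabilityMeasure.continuous_map continuous_fst) continuous_const).inter
      (isClosed_eq (ProbabilityMeasure.continuous_map continuous_snd) continuous_const)
  have hne : K.Nonempty := by
    refine ⟨⟨μ.prod ν, inferInstance⟩, ?_, ?_⟩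
    · apply Subtype.ext
      simp [μ', ProbabilityMeasure.map]
    · apply Subtype.ext
      simp [ν', ProbabilityMeasure.map]
  let f : C(S × S, ℝ) := ⟨fun z => dist z.1 z.2 ^ p, by
    exact (continuous_fst.dist continuous_snd).rpow_const (fun _ => Or.inr hp0.le)⟩
  have hcont : Continuous (fun Γ : ProbabilityMeasure (S × S) =>
      ∫ z, dist z.1 z.2 ^ p ∂(Γ : Measure (S × S))) := by
    rw [continuous_iff_continuousAt]
    intro Γ
    exact (ProbabilityMeasure.tendsto_iff_forall_integral_tendsto.1 Filter.tendsto_id)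
      (BoundedContinuousFunction.mkOfCompact f)
  obtain ⟨Γ, hΓ, hmin⟩ := hK.exists_isMinOn hne hcont.continuousOn
  have h1 : (Γ : Measure (S × S)).map Prod.fst = μ := congrArg Subtype.val hΓ.1
  have h2 : (Γ : Measure (S × S)).map Prod.snd = ν := congrArg Subtype.val hΓ.2
  refine ⟨Γ, inferInstance, h1, h2, ?_⟩
  unfold Wp
  apply IsLeast.csInf_eq
  refine ⟨⟨Γ, inferInstance, h1, h2, rfl⟩, ?_⟩
  rintro c ⟨Γ', hP, h1', h2', rfl⟩
  have hmem : (⟨Γ', hP⟩ : ProbabilityMeasure (S × S)) ∈ K :=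
    ⟨Subtype.ext h1', Subtype.ext h2'⟩
  have := hmin hmem
  apply Real.rpow_le_rpow
  · exact integral_nonneg fun z => Real.rpow_nonneg dist_nonneg _
  · exact this
  · positivity

lemma aux_const {S : Type*} [MetricSpace S] [MeasurableSpace S]
    {p : ℝ} (hp : 1 < p) {c : ℝ} (hc : 0 ≤ c) {Γ : Measure (S × S)} [IsProbabilityMeasure Γ]
    (h : ∀ᵐ z ∂Γ, dist z.1 z.2 = c) : (∫ z, dist z.1 z.2 ^ p ∂Γ) ^ (1 / p) = c := by
  have : ∫ z, dist z.1 z.2 ^ p ∂Γ = ∫ z, c ^ p ∂Γ := by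
    apply integral_congr_ae
    filter_upwards [h] with z hz
    rw [hz]
  rw [this, integral_const, probReal_univ, one_smul, ← Real.rpow_mul hc,
    mul_one_div_cancel (by linarith), Real.rpow_one]

lemma aux_bern {p : ℝ} (hp : 1 < p) {u a : ℝ} (hu : 0 ≤ u) (ha : 0 < a) :
    0 ≤ a * ((u / a) ^ p - 1 - p * (u / a - 1)) ∧
    (a * ((u / a) ^ p - 1 - p * (u / a - 1)) = 0 → u = a) := by
  by_cases h : u / a - 1 = 0
  · have h1 : u / a = 1 := by linarith
    have : u = a := by field_simp at h1; exact h1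
    subst this
    simp [h1]
  · have h2 := one_add_mul_self_lt_rpow_one_add
      (by have : 0 ≤ u / a := by positivity
          linarith) h hp
    have h3 : 1 + (u / a - 1) = u / a := by ring
    rw [h3] at h2
    have : 0 < a * ((u / a) ^ p - 1 - p * (u / a - 1)) := mul_pos ha (by linarith)
    exact ⟨this.le, fun h0 => absurd h0 this.ne'⟩

lemma aux_jensen {Ω : Type*} [TopologicalSpace Ω] [CompactSpace Ω] [MeasurableSpace Ω]
    [OpensMeasurableSpace Ω] (Γ : Measure Ω) [IsProbabilityMeasure Γ] {p : ℝ} (hp : 1 < p)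
    {r d : Ω → ℝ} (hr : Continuous r) (hd : Continuous d) (hr0 : ∀ z, 0 ≤ r z) (hd0 : ∀ z, 0 ≤ d z)
    {a b : ℝ} (ha : 0 < a) (hb : 0 < b) (hI : ∫ z, r z ^ p ∂Γ = a ^ p)
    (hJ : ∫ z, d z ^ p ∂Γ = b ^ p) (hrd : ∀ᵐ z ∂Γ, a + b ≤ r z + d z) :
    ∀ᵐ z ∂Γ, r z = a ∧ d z = b := by
  have key : ∀ f : Ω → ℝ, Continuous f → Integrable f Γ := fun f hf =>
    hf.integrable_of_hasCompactSupport (HasCompactSupport.of_compactSpace f)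
  have hpc : ∀ f : Ω → ℝ, Continuous f → Continuous (fun z => f z ^ p) := fun f hf =>
    hf.rpow_const (fun _ => Or.inr (by linarith))
  have one : ∀ f : Ω → ℝ, Continuous f → (∀ z, 0 ≤ f z) → ∀ c : ℝ, 0 < c →
      ∫ z, f z ^ p ∂Γ = c ^ p →
      ∫ z, c * ((f z / c) ^ p - 1 - p * (f z / c - 1)) ∂Γ = - p * (∫ z, f z ∂Γ - c) := by
    intro f hf hf0 c hc h
    have e : ∀ z, c * ((f z / c) ^ p - 1 - p * (f z / c - 1)) =
        (c / c ^ p) * f z ^ p - p * f z + (p * c - c) := by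
      intro z
      rw [Real.div_rpow (hf0 z) hc.le]
      have := Real.rpow_pos_of_pos hc p
      field_simp
      ring
    simp_rw [e]
    have i1 : Integrable (fun z => (c / c ^ p) * f z ^ p) Γ := (key _ (hpc f hf)).const_mul _
    have i2 : Integrable (fun z => p * f z) Γ := (key _ hf).const_mul _
    rw [integral_add (by exact i1.sub i2) (integrable_const _), integral_sub i1 i2, integral_const_mul,
      integral_const_mul, h, integral_const, probReal_univ, one_smul]
    have := Real.rpow_pos_of_pos hc p
    field_simp
    ring
  let φ : Ω → ℝ := fun z => a * ((r z / a) ^ p - 1 - p * (r z / a - 1))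
  let ψ : Ω → ℝ := fun z => b * ((d z / b) ^ p - 1 - p * (d z / b - 1))
  have cφ : Continuous φ := by
    have := hpc (fun z => r z / a) (by fun_prop)
    fun_prop
  have cψ : Continuous ψ := by
    have := hpc (fun z => d z / b) (by fun_prop)
    fun_prop
  have hφ : ∀ z, 0 ≤ φ z := fun z => (aux_bern hp (hr0 z) ha).1
  have hψ : ∀ z, 0 ≤ ψ z := fun z => (aux_bern hp (hd0 z) hb).1
  have hsum : ∫ z, (φ z + ψ z) ∂Γ ≤ 0 := by
    rw [integral_add (key _ cφ) (key _ cψ), one r hr hr0 a ha hI, one d hd hd0 b hb hJ]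
    have : ∫ z, (a + b) ∂Γ ≤ ∫ z, (r z + d z) ∂Γ :=
      integral_mono_ae (integrable_const _) (key _ (hr.add hd)) hrd
    rw [integral_const, probReal_univ, one_smul, integral_add (key _ hr) (key _ hd)] at this
    nlinarith
  have h0 : ∫ z, (φ z + ψ z) ∂Γ = 0 :=
    le_antisymm hsum (integral_nonneg fun z => add_nonneg (hφ z) (hψ z))
  rw [integral_eq_zero_iff_of_nonneg (fun z => add_nonneg (hφ z) (hψ z))
    (key _ (cφ.add cψ))] at h0
  filter_upwards [h0] with z hz
  have hz' : φ z + ψ z = 0 := hz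
  have h1 := hφ z
  have h2 := hψ z
  exact ⟨(aux_bern hp (hr0 z) ha).2 (by change φ z = 0; linarith),
    (aux_bern hp (hd0 z) hb).2 (by change ψ z = 0; linarith)⟩

lemma aux_cont {X S : Type*} [MetricSpace X] [MetricSpace S] (susp : SuspensionOf X S) :
    ContinuousOn (fun q : X × ℝ => susp.pt q.1 q.2) (Set.univ ×ˢ Set.Icc 0 Real.pi) := by
  rintro ⟨y, s⟩ ⟨-, hs⟩
  rw [ContinuousWithinAt, tendsto_iff_dist_tendsto_zero]
  have hc : Continuous (fun q : X × ℝ => Real.arccos (Real.cos q.2 * Real.cos s +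
        Real.sin q.2 * Real.sin s * Real.cos (dist q.1 y))) := by
    apply Real.continuous_arccos.comp
    fun_prop
  have h := (hc.tendsto (y, s)).mono_left
    (nhdsWithin_le_nhds (s := Set.univ ×ˢ Set.Icc 0 Real.pi))
  have e : Real.cos s * Real.cos s + Real.sin s * Real.sin s * Real.cos (dist y y) = 1 := by
    simp only [dist_self, Real.cos_zero, mul_one]
    nlinarith [Real.sin_sq_add_cos_sq s]
  simp only [e, Real.arccos_one] at h
  refine h.congr' ?_
  filter_upwards [self_mem_nhdsWithin] with q hq
  exact (susp.dist_eq q.1 y q.2 s hq.2 hs).symm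

/-- If `μ ∈ P_p(Susp(X))` is supported on the equator `X × {π/2}` (i.e. `μ` is the
pushforward of a probability measure `μ₀` on `X` under `x ↦ [x,π/2]`), then
`s ↦ (L_s)_#μ`, where `L_s([x,t]) = [x,st]`, is the unique constant-speed geodesic
from `δ_𝟎` to `μ` in `P_p(Susp(X))`. -/
theorem stmt_15 {X S : Type*} [MetricSpace X] [CompactSpace X] [Nonempty X]
    [MeasurableSpace X] [BorelSpace X]
    [MetricSpace S] [MeasurableSpace S] [BorelSpace S]
    (hdiam : ∀ a b : X, dist a b < Real.pi / 2)
    (p : ℝ) (hp : 1 < p) (susp : SuspensionOf X S)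
    (μ₀ : Measure X) [IsProbabilityMeasure μ₀] :
    ∀ v0 : S, v0 = susp.pt (Classical.arbitrary X) 0 →
    ∀ μ : Measure S, μ = μ₀.map (fun x : X => susp.pt x (Real.pi / 2)) →
    ∀ G : ℝ → Measure S,
      G = (fun s : ℝ => μ₀.map (fun x : X => susp.pt x (s * (Real.pi / 2)))) →
      -- `G` is a constant-speed geodesic from `δ_𝟎` to `μ`
      ((G 0 = Measure.dirac v0 ∧ G 1 = μ ∧
        (∀ s t : ℝ, s ∈ Set.Icc (0 : ℝ) 1 → t ∈ Set.Icc (0 : ℝ) 1 →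
          Wp (fun a b : S => dist a b) p (G s) (G t) =
            |s - t| * Wp (fun a b : S => dist a b) p (Measure.dirac v0) μ)) ∧
      -- and it is the unique such geodesic
      (∀ γ : ℝ → Measure S, γ 0 = Measure.dirac v0 → γ 1 = μ →
        (∀ t ∈ Set.Icc (0 : ℝ) 1, IsProbabilityMeasure (γ t)) →
        (∀ s t : ℝ, s ∈ Set.Icc (0 : ℝ) 1 → t ∈ Set.Icc (0 : ℝ) 1 →
          Wp (fun a b : S => dist a b) p (γ s) (γ t) =
            |s - t| * Wp (fun a b : S => dist a b) p (Measure.dirac v0) μ) →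
        ∀ t ∈ Set.Icc (0 : ℝ) 1, γ t = G t)) := by
  intro v0 hv0 μ hμ G hG
  have hpi := Real.pi_pos
  have hmemI : ∀ s ∈ Set.Icc (0 : ℝ) 1, s * (Real.pi / 2) ∈ Set.Icc (0 : ℝ) Real.pi := by
    rintro s ⟨h0, h1⟩
    exact ⟨by positivity, by nlinarith⟩
  have hcontOn := aux_cont susp
  have hcpt : ∀ t ∈ Set.Icc (0 : ℝ) Real.pi, Continuous (fun x : X => susp.pt x t) := by
    intro t ht
    exact hcontOn.comp_continuous (f := fun x : X => (x, t)) (by fun_prop) (fun x => ⟨trivial, ht⟩)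
  have : CompactSpace S := by
    have h1 := (isCompact_univ (X := X)).prod (isCompact_Icc (a := (0 : ℝ)) (b := Real.pi))
    have h2 := h1.image_of_continuousOn hcontOn
    refine ⟨?_⟩
    convert h2
    symm
    rw [Set.eq_univ_iff_forall]
    intro z
    obtain ⟨x, t, ht, rfl⟩ := susp.surj z
    exact ⟨(x, t), ⟨trivial, ht⟩, rfl⟩
  have hv : ∀ x t, t ∈ Set.Icc (0 : ℝ) Real.pi → dist v0 (susp.pt x t) = t := by
    intro x t ht
    rw [hv0, susp.dist_eq _ _ _ _ ⟨le_refl _, hpi.le⟩ ht]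
    simp [Real.arccos_cos ht.1 ht.2]
  have hpt0 : ∀ x, susp.pt x 0 = v0 := by
    intro x
    exact (dist_eq_zero.1 (hv x 0 ⟨le_refl _, hpi.le⟩)).symm
  have hhalf : Real.pi / 2 ∈ Set.Icc (0 : ℝ) Real.pi := ⟨by positivity, by linarith⟩
  have hG0 : G 0 = Measure.dirac v0 := by
    rw [hG]
    simp [hpt0]
  have hG1 : G 1 = μ := by
    rw [hG, hμ]
    simp
  have hprob : ∀ s ∈ Set.Icc (0 : ℝ) 1, IsProbabilityMeasure (G s) := by
    intro s hs
    rw [hG]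
    exact Measure.isProbabilityMeasure_map (hcpt _ (hmemI s hs)).measurable.aemeasurable
  have hGae : ∀ s ∈ Set.Icc (0 : ℝ) 1, ∀ᵐ z ∂(G s), dist v0 z = s * (Real.pi / 2) := by
    intro s hs
    rw [hG]
    simp only
    rw [ae_map_iff (hcpt _ (hmemI s hs)).measurable.aemeasurable
      (measurableSet_eq_fun (by fun_prop) (by fun_prop))]
    exact Filter.Eventually.of_forall fun x => hv x _ (hmemI s hs)
  have hle : ∀ s ∈ Set.Icc (0 : ℝ) 1, ∀ t ∈ Set.Icc (0 : ℝ) 1, ∀ x,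
      dist (susp.pt x (s * (Real.pi / 2))) (susp.pt x (t * (Real.pi / 2))) =
        |s - t| * (Real.pi / 2) := by
    intro s hs t ht x
    rw [susp.dist_eq _ _ _ _ (hmemI s hs) (hmemI t ht), dist_self, Real.cos_zero, mul_one,
      ← Real.cos_sub, ← Real.cos_abs, ← sub_mul, abs_mul, abs_of_pos (half_pos hpi)]
    apply Real.arccos_cos
    · positivity
    · have : |s - t| ≤ 1 := by rw [abs_le]; constructor <;> linarith [hs.1, hs.2, ht.1, ht.2]
      nlinarith
  have hWG : ∀ s ∈ Set.Icc (0 : ℝ) 1, ∀ t ∈ Set.Icc (0 : ℝ) 1,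
      Wp (fun a b : S => dist a b) p (G s) (G t) = |s - t| * (Real.pi / 2) := by
    intro s hs t ht
    have ms := (hcpt _ (hmemI s hs)).measurable
    have mt := (hcpt _ (hmemI t ht)).measurable
    have hnn : 0 ≤ |s - t| * (Real.pi / 2) := by positivity
    unfold Wp
    apply IsLeast.csInf_eq
    constructor
    · have hP : IsProbabilityMeasure (μ₀.map (fun x : X =>
          (susp.pt x (s * (Real.pi / 2)), susp.pt x (t * (Real.pi / 2))))) :=
        Measure.isProbabilityMeasure_map (ms.prodMk mt).aemeasurable
      refine ⟨_, hP, ?_, ?_, ?_⟩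
      · rw [Measure.map_map measurable_fst (ms.prodMk mt), hG]; rfl
      · rw [Measure.map_map measurable_snd (ms.prodMk mt), hG]; rfl
      · symm
        apply aux_const hp hnn
        rw [ae_map_iff (ms.prodMk mt).aemeasurable
          (measurableSet_eq_fun (by fun_prop) (by fun_prop))]
        exact Filter.Eventually.of_forall fun x => hle s hs t ht x
    · rintro c ⟨Γ, hP, h1, h2, rfl⟩
      have a1 : ∀ᵐ z ∂Γ, dist v0 z.1 = s * (Real.pi / 2) :=
        ae_of_ae_map measurable_fst.aemeasurable (by rw [h1]; exact hGae s hs)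
      have a2 : ∀ᵐ z ∂Γ, dist v0 z.2 = t * (Real.pi / 2) :=
        ae_of_ae_map measurable_snd.aemeasurable (by rw [h2]; exact hGae t ht)
      have hcd : Continuous (fun z : S × S => dist z.1 z.2 ^ p) :=
        (continuous_fst.dist continuous_snd).rpow_const (fun _ => Or.inr (by linarith))
      have hi : Integrable (fun z : S × S => dist z.1 z.2 ^ p) Γ :=
        hcd.integrable_of_hasCompactSupport (HasCompactSupport.of_compactSpace _)
      have hI : (|s - t| * (Real.pi / 2)) ^ p ≤ ∫ z, dist z.1 z.2 ^ p ∂Γ := by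
        have : ∫ z : S × S, (|s - t| * (Real.pi / 2)) ^ p ∂Γ ≤ ∫ z, dist z.1 z.2 ^ p ∂Γ := by
          apply integral_mono_ae (integrable_const _) hi
          filter_upwards [a1, a2] with z h1 h2
          apply Real.rpow_le_rpow hnn _ (by linarith)
          have := abs_dist_sub_le z.1 z.2 v0
          rw [dist_comm z.1 v0, dist_comm z.2 v0, h1, h2, ← sub_mul, abs_mul,
            abs_of_pos (half_pos hpi)] at this
          exact this
        simpa using this
      have := Real.rpow_le_rpow (Real.rpow_nonneg hnn p) hI (z := 1 / p) (by positivity)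
      rwa [← Real.rpow_mul hnn, mul_one_div_cancel (by linarith), Real.rpow_one] at this
  have hW : Wp (fun a b : S => dist a b) p (Measure.dirac v0) μ = Real.pi / 2 := by
    rw [← hG0, ← hG1, hWG 0 (by simp) 1 (by simp)]
    simp
  refine ⟨⟨hG0, hG1, fun s t hs ht => by rw [hW]; exact hWG s hs t ht⟩, ?_⟩
  intro γ hγ0 hγ1 hγP hγ t ht
  rcases eq_or_lt_of_le ht.1 with h0 | h0
  · rw [← h0, hγ0, hG0]
  rcases eq_or_lt_of_le ht.2 with h1 | h1
  · rw [h1, hγ1, hG1]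
  have hP := hγP t ht
  have hPμ : IsProbabilityMeasure μ := by rw [← hγ1]; exact hγP 1 (by simp)
  set a := t * (Real.pi / 2) with ha
  set b := (1 - t) * (Real.pi / 2) with hb
  have hapos : 0 < a := by positivity
  have hbpos : 0 < b := mul_pos (by linarith) (by positivity)
  have hW1 : Wp (fun a b : S => dist a b) p (Measure.dirac v0) (γ t) = a := by
    rw [← hγ0, hγ 0 t (by simp) ht, hW, zero_sub, abs_neg, abs_of_pos h0]
  have hW2 : Wp (fun a b : S => dist a b) p (γ t) μ = b := by
    rw [← hγ1, hγ t 1 ht (by simp), hW, abs_sub_comm, abs_of_pos (by linarith)]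
  have hroot : ∀ (Γ : Measure (S × S)) (c : ℝ),
      c = (∫ z, dist z.1 z.2 ^ p ∂Γ) ^ (1 / p) → ∫ z, dist z.1 z.2 ^ p ∂Γ = c ^ p := by
    rintro Γ c rfl
    rw [← Real.rpow_mul (integral_nonneg fun z => Real.rpow_nonneg dist_nonneg _),
      one_div_mul_cancel (by linarith), Real.rpow_one]
  -- the radial moment
  have hmom : ∫ z, dist v0 z ^ p ∂(γ t) = a ^ p := by
    obtain ⟨Γ, hΓP, hΓ1, hΓ2, hΓ⟩ := aux_attained p hp (Measure.dirac v0) (γ t)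
    rw [hW1] at hΓ
    rw [← hroot Γ a hΓ, ← hΓ2, integral_map measurable_snd.aemeasurable]
    · apply integral_congr_ae
      have : ∀ᵐ z ∂Γ, z.1 = v0 := by
        apply ae_of_ae_map (p := fun w => w = v0) measurable_fst.aemeasurable
        rw [hΓ1]
        exact (ae_dirac_iff (p := fun w => w = v0) (measurableSet_singleton v0)).2 rfl
      filter_upwards [this] with z hz
      rw [hz]
    · have : Continuous (fun z : S => dist v0 z ^ p) :=
        (continuous_const.dist continuous_id).rpow_const (fun _ => Or.inr (by linarith))
      exact this.aestronglyMeasurable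
  obtain ⟨Γ, hΓP, hΓ1, hΓ2, hΓ⟩ := aux_attained p hp (γ t) μ
  rw [hW2] at hΓ
  have hJ := hroot Γ b hΓ
  have hI : ∫ z, dist v0 z.1 ^ p ∂Γ = a ^ p := by
    rw [← hmom, ← hΓ1, integral_map measurable_fst.aemeasurable]
    have : Continuous (fun z : S => dist v0 z ^ p) :=
      (continuous_const.dist continuous_id).rpow_const (fun _ => Or.inr (by linarith))
    exact this.aestronglyMeasurable
  have hec := hcpt _ hhalf
  have heq : ∀ᵐ z ∂Γ, z.2 ∈ Set.range (fun x : X => susp.pt x (Real.pi / 2)) := by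
    apply ae_of_ae_map (p := fun w => w ∈ Set.range (fun x : X => susp.pt x (Real.pi / 2)))
      measurable_snd.aemeasurable
    rw [hΓ2, hμ]
    refine (ae_map_iff (p := fun w => w ∈ Set.range (fun x : X => susp.pt x (Real.pi / 2)))
      hec.measurable.aemeasurable (isCompact_range hec).measurableSet).2 ?_
    exact Filter.Eventually.of_forall fun x => ⟨x, rfl⟩
  have hab : a + b = Real.pi / 2 := by rw [ha, hb]; ring
  have hae := aux_jensen Γ hp (r := fun z : S × S => dist v0 z.1) (d := fun z => dist z.1 z.2)
    (by fun_prop) (by fun_prop) (fun _ => dist_nonneg) (fun _ => dist_nonneg) hapos hbpos hI hJ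
    (by
      filter_upwards [heq] with z hz
      obtain ⟨x, hx⟩ := hz
      have := dist_triangle v0 z.1 z.2
      rw [← hx] at this ⊢
      rw [hv x _ hhalf] at this
      linarith)
  have hinj : Function.Injective (fun x : X => susp.pt x (Real.pi / 2)) := by
    intro x y hxy
    have h := susp.dist_eq x y _ _ hhalf hhalf
    simp only at hxy
    rw [hxy, dist_self] at h
    simp only [Real.cos_pi_div_two, Real.sin_pi_div_two, mul_zero, zero_add, one_mul] at h
    rw [Real.arccos_cos dist_nonneg (by linarith [hdiam x y])] at h
    exact dist_eq_zero.1 h.symm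
  have hemb : MeasurableEmbedding (fun x : X => susp.pt x (Real.pi / 2)) :=
    (hec.isClosedEmbedding hinj).measurableEmbedding
  have mt := (hcpt _ (hmemI t ht)).measurable
  obtain ⟨L, hLm, hL⟩ := hemb.exists_measurable_extend mt (fun _ => ⟨v0⟩)
  have hzL : ∀ᵐ z ∂Γ, z.1 = L z.2 := by
    filter_upwards [hae, heq] with z hz hz2
    obtain ⟨hz1, hzd⟩ := hz
    obtain ⟨y, hy⟩ := hz2
    obtain ⟨x, τ, hτ, hx⟩ := susp.surj z.1
    simp only at hy hz1 hzd
    rw [← hx, hv x τ hτ] at hz1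
    subst hz1
    have hxy : x = y := by
      rw [← hx, ← hy, susp.dist_eq _ _ _ _ hτ hhalf] at hzd
      simp only [Real.cos_pi_div_two, Real.sin_pi_div_two, mul_zero, zero_add, mul_one] at hzd
      have hs : 0 < Real.sin a := Real.sin_pos_of_pos_of_lt_pi hapos (by linarith)
      have hc := congrArg Real.cos hzd
      have hb' : b = Real.pi / 2 - a := by linarith
      have c1 := Real.neg_one_le_cos (dist x y)
      have c2 := Real.cos_le_one (dist x y)
      have s1 := Real.sin_le_one a
      rw [Real.cos_arccos (by nlinarith) (by nlinarith), hb', Real.cos_pi_div_two_sub] at hc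
      have hcos : Real.cos (dist x y) = 1 := by
        have := mul_left_cancel₀ hs.ne' (hc.trans (mul_one _).symm)
        exact this
      have := (Real.cos_eq_one_iff_of_lt_of_lt (by linarith [dist_nonneg (x := x) (y := y)])
        (by linarith [hdiam x y])).1 hcos
      exact dist_eq_zero.1 this
    rw [← hx, ← hy, hxy]
    exact (congrFun hL y).symm
  calc γ t = Γ.map Prod.fst := hΓ1.symm
    _ = Γ.map (fun z => L z.2) := Measure.map_congr hzL
    _ = (Γ.map Prod.snd).map L := (Measure.map_map hLm measurable_snd).symm
    _ = G t := by
      rw [hΓ2, hμ, Measure.map_map hLm hec.measurable, hL, hG]
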